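/- Let d ≥ 1, D ≥ 1, and let (A_n)_{n≥1} be rotor-router aggregation in ℤ^d built from any configuration of rotor stacks with discrepancy at most D, with T_n the total number of steps taken by the first n particles. Then there is a constant C = C(d), independent of n, D, and the rotor configuration, such that for all n ≥ 1, T_n ≤ (d/(d+2)) ω_d^{−2/d} n^{1+2/d} + Φ(n) + C D n^{1+1/d}. -/

import Mathlib

open scoped BigOperators Pointwise symmDiff
open MeasureTheory Filter

noncomputable section
open scoped Classical
namespace RotorRouterPaper

/-- Sites of the lattice `ℤ^d`. -/
abbrev Site (d : ℕ) := Fin d → ℤ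

/-- The `i`-th standard basis vector of `ℤ^d`. -/
def unitVec (d : ℕ) (i : Fin d) : Site d := fun j => if j = i then 1 else 0

/-- Squared Euclidean norm of a lattice point. -/
def nsq {d : ℕ} (x : Site d) : ℝ := ∑ i, ((x i : ℝ)) ^ 2

/-- Euclidean norm of a lattice point. -/
def enorm {d : ℕ} (x : Site d) : ℝ := Real.sqrt (nsq x)

/-- Adjacency `x ∼ y`: Euclidean distance one. -/
def Adj {d : ℕ} (x y : Site d) : Prop := nsq (x - y) = 1

/-- `ω_d`, the Lebesgue volume of the unit ball in `ℝ^d`. -/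
def ballVol (d : ℕ) : ℝ := (volume (Metric.ball (0 : EuclideanSpace ℝ (Fin d)) 1)).toReal

/-- The lattice ball `B_n = {y ∈ ℤ^d : ω_d ‖y‖^d < n}`. -/
def lball (d n : ℕ) : Set (Site d) := {y | ballVol d * enorm y ^ d < (n : ℝ)}

/-- Characterization of the expected exit time function of a (finite) region `A ⊆ ℤ^d`:
it vanishes off `A` and its discrete Laplacian is `-1` on `A`. -/
def IsExitFun (d : ℕ) (A : Set (Site d)) (e : Site d → ℝ) : Prop :=
  (∀ x, x ∉ A → e x = 0) ∧
  ∀ x ∈ A, (1 / (2 * (d : ℝ))) * (∑ i, (e (x + unitVec d i) + e (x - unitVec d i))) - e x = -1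

/-- The expected exit time function `x ↦ e_x(A)` (the unique function satisfying
`IsExitFun` when `A` is finite). -/
def exitFun (d : ℕ) (A : Set (Site d)) : Site d → ℝ :=
  if h : ∃ e, IsExitFun d A e then h.choose else 0

/-- `ē(A) = sup_x e_x(A)`. -/
def ebar (d : ℕ) (A : Set (Site d)) : ℝ := sSup (Set.range (exitFun d A))

/-- `φ(n) = sup {ē(A) - e_o(B_n) : A ⊆ ℤ^d, |A| = n}`. -/
def phi (d n : ℕ) : ℝ :=
  sSup {t | ∃ A : Set (Site d), A.Finite ∧ A.ncard = n ∧ t = ebar d A - exitFun d (lball d n) 0}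

/-- `Φ(n) = ∑_{j=1}^n φ(j)`. -/
def PhiSum (d n : ℕ) : ℝ := ∑ j ∈ Finset.Icc 1 n, phi d j

/-- `ψ(A) = ∑_{x ∈ A} ‖x‖²`. -/
def psi {d : ℕ} (A : Set (Site d)) : ℝ := ∑ᶠ x ∈ A, nsq x

/-- A cardinal direction in `ℤ^d`: one of `±e_1, …, ±e_d`. -/
abbrev Dir (d : ℕ) := Fin d × Bool

/-- The lattice step vector of a cardinal direction. -/
def dirVec (d : ℕ) (ε : Dir d) : Site d := if ε.2 then unitVec d ε.1 else -unitVec d ε.1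

/-- A configuration of rotor stacks `r` (with `r x i` the direction used for the
`(i+1)`-st visit to `x`) has discrepancy at most `D` if for every site, direction and `m ≥ 1`,
among the first `m` rotors of the stack each direction occurs `m/(2d)` times up to error `D`. -/
def HasDiscrepancy (d : ℕ) (D : ℝ) (r : Site d → ℕ → Dir d) : Prop :=
  ∀ (x : Site d) (ε : Dir d) (m : ℕ), 1 ≤ m →
    |(({i | i < m ∧ r x i = ε} : Set ℕ).ncard : ℝ) - (m : ℝ) / (2 * (d : ℝ))| ≤ D

/-- One step of rotor-router walk on a state (current position, visit counts so far):
the particle at `p` being visited for the `(c p + 1)`-st time moves in direction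
`r p (c p)` and the visit count at `p` increases by one. -/
def rstep {d : ℕ} (r : Site d → ℕ → Dir d) (s : Site d × (Site d → ℕ)) :
    Site d × (Site d → ℕ) :=
  (s.1 + dirVec d (r s.1 (s.2 s.1)), Function.update s.2 s.1 (s.2 s.1 + 1))

/-- The state after `t` steps of rotor-router walk started at the origin with visit counts `c`. -/
def walkState {d : ℕ} (r : Site d → ℕ → Dir d) (c : Site d → ℕ) (t : ℕ) :
    Site d × (Site d → ℕ) :=
  (rstep r)^[t] (0, c)

/-- The number of steps until the rotor-router walk started at the origin
(with carried-over visit counts `c`) first leaves the region `A`. -/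
def exitSteps {d : ℕ} (r : Site d → ℕ → Dir d) (A : Set (Site d)) (c : Site d → ℕ) : ℕ :=
  sInf {t | (walkState r c t).1 ∉ A}

/-- The state of rotor-router aggregation after `n` particles have walked and settled:
`(aggState r n).1` is the occupied region `A_{n+1}`, `(aggState r n).2.1` the accumulated
visit counts, and `(aggState r n).2.2` the total number `T_n` of steps taken so far. -/
def aggState {d : ℕ} (r : Site d → ℕ → Dir d) : ℕ → Set (Site d) × (Site d → ℕ) × ℕ
  | 0 => ({0}, fun _ => 0, 0)
  | n + 1 =>
      let s := aggState r n
      let τ := exitSteps r s.1 s.2.1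
      (insert (walkState r s.2.1 τ).1 s.1, (walkState r s.2.1 τ).2, s.2.2 + τ)

/-- The region `A_n` of rotor-router aggregation (for `n ≥ 1`). -/
def aggRegion {d : ℕ} (r : Site d → ℕ → Dir d) (n : ℕ) : Set (Site d) :=
  (aggState r (n - 1)).1

/-- `T_n`, the total number of steps taken by the first `n` particles. -/
def totalSteps {d : ℕ} (r : Site d → ℕ → Dir d) (n : ℕ) : ℕ := (aggState r n).2.2

/-- `A^□ = A + [-1/2,1/2]^d ⊆ ℝ^d`. -/
def box (d : ℕ) (A : Set (Site d)) : Set (EuclideanSpace ℝ (Fin d)) :=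
  {z | ∃ x ∈ A, ∀ i, |z i - (x i : ℝ)| ≤ 1 / 2}

/-- The closed Euclidean ball of unit volume centered at the origin of `ℝ^d`. -/
def unitVolBall (d : ℕ) : Set (EuclideanSpace ℝ (Fin d)) :=
  Metric.closedBall 0 (ballVol d ^ (-(1 : ℝ) / (d : ℝ)))

/-- `A ⊆ ℤ^d` is orthoconvex if every line parallel to a coordinate axis meets `A`
in an interval. -/
def Orthoconvex (d : ℕ) (A : Set (Site d)) : Prop :=
  ∀ x ∈ A, ∀ i : Fin d, ∀ k : ℤ, 0 < k → x + k • unitVec d i ∈ A →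
    ∀ j : ℤ, 0 < j → j < k → x + j • unitVec d i ∈ A

/-- The nonnegative orthant `Q ⊆ ℤ^d`. -/
def orthant (d : ℕ) : Set (Site d) := {x | ∀ i, 0 ≤ x i}

/-- The cube `C(o,r) = {x : ‖x‖_∞ ≤ r}`. -/
def cubeSet (d : ℕ) (r : ℕ) : Set (Site d) := {x | ∀ i, |x i| ≤ (r : ℤ)}

/-- The boundary `∂C(o,r) = {x : ‖x‖_∞ = r + 1 and x ∼ y for some y ∈ C(o,r)}`. -/
def cubeBdry (d : ℕ) (r : ℕ) : Set (Site d) :=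
  {x | (∀ i, |x i| ≤ (r : ℤ) + 1) ∧ (∃ i, |x i| = (r : ℤ) + 1) ∧ ∃ y ∈ cubeSet d r, Adj x y}

/-- Characterization of `h_r(x) = P_x(T_Q > T_{∂C(o,r)})`: it vanishes on
`Q ∩ (C(o,r) ∪ ∂C(o,r))`, equals `1` on `∂C(o,r) ∖ Q`, is discrete harmonic on
`C(o,r) ∖ Q`, and (as a normalization) vanishes off `C(o,r) ∪ ∂C(o,r)`. -/
def IsOrthHarm (d : ℕ) (r : ℕ) (h : Site d → ℝ) : Prop :=
  (∀ x, x ∉ cubeSet d r ∪ cubeBdry d r → h x = 0) ∧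
  (∀ x ∈ orthant d ∩ (cubeSet d r ∪ cubeBdry d r), h x = 0) ∧
  (∀ x ∈ cubeBdry d r \ orthant d, h x = 1) ∧
  (∀ x ∈ cubeSet d r \ orthant d,
    h x = (1 / (2 * (d : ℝ))) * ∑ i, (h (x + unitVec d i) + h (x - unitVec d i)))

/-- The function `h_r` of the previous characterization. -/
def orthHarm (d : ℕ) (r : ℕ) : Site d → ℝ :=
  if h : ∃ f, IsOrthHarm d r f then h.choose else 0

/-- `p(k,r) = sup {h_r(x) : ‖x‖_∞ ≤ k}`. -/
def pkr (d k r : ℕ) : ℝ :=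
  sSup {t | ∃ x : Site d, (∀ i, |x i| ≤ (k : ℤ)) ∧ t = orthHarm d r x}

/-- The exponent `γ_d` of Theorem 3.1. -/
def gam (d : ℕ) : ℝ :=
  if d = 1 then 1 else if d = 2 then 1 / 3
  else (2 : ℝ) ^ (-(d : ℝ)) / (2 * (d : ℝ) ^ 2 * Real.log 3)

/-- The discrete Laplacian. -/
def lap {d : ℕ} (f : Site d → ℝ) (x : Site d) : ℝ :=
  (1 / (2 * (d : ℝ))) * (∑ i, (f (x + unitVec d i) + f (x - unitVec d i))) - f x

lemma lap_sub {d : ℕ} (f g : Site d → ℝ) (x : Site d) :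
    lap (fun y => f y - g y) x = lap f x - lap g x := by
  have : (∑ i, ((f (x + unitVec d i) - g (x + unitVec d i)) + (f (x - unitVec d i) - g (x - unitVec d i))))
      = (∑ i, (f (x + unitVec d i) + f (x - unitVec d i))) - (∑ i, (g (x + unitVec d i) + g (x - unitVec d i))) := by
    rw [← Finset.sum_sub_distrib]
    exact Finset.sum_congr rfl (fun i _ => by ring)
  simp only [lap, this]; ring

lemma lap_const {d : ℕ} (hd : 1 ≤ d) (t : ℝ) (x : Site d) : lap (fun _ => t) x = 0 := by
  have : (d : ℝ) ≠ 0 := by positivity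
  simp [lap]; field_simp; ring

lemma sum_dir {d : ℕ} (f : Site d → ℝ) (x : Site d) :
    ∑ ε : Dir d, f (x + dirVec d ε) = ∑ i, (f (x + unitVec d i) + f (x - unitVec d i)) := by
  rw [Fintype.sum_prod_type]
  refine Finset.sum_congr rfl (fun i _ => ?_)
  simp [dirVec, sub_eq_add_neg]

lemma maxp {d : ℕ} (hd : 1 ≤ d) (A : Set (Site d)) (hA : A.Finite) (f : Site d → ℝ)
    (h1 : ∀ x ∈ A, 0 ≤ lap f x)
    (h2 : ∀ x ∈ A, ∀ ε : Dir d, x + dirVec d ε ∉ A → f (x + dirVec d ε) ≤ 0) :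
    ∀ x ∈ A, f x ≤ 0 := by
  by_contra hcon
  push Not at hcon
  obtain ⟨x1, hx1, hfx1⟩ := hcon
  obtain ⟨x2, hx2, hmax⟩ := Set.exists_max_image A f hA ⟨x1, hx1⟩
  have hpos : 0 < f x2 := lt_of_lt_of_le hfx1 (hmax x1 hx1)
  let i0 : Fin d := ⟨0, hd⟩
  obtain ⟨x, ⟨hxA, hxf⟩, hxm⟩ := Set.exists_max_image {x | x ∈ A ∧ f x = f x2} (fun x => x i0)
    (hA.subset (fun x hx => hx.1)) ⟨x2, hx2, rfl⟩
  have hle : ∀ ε : Dir d, f (x + dirVec d ε) ≤ f x2 := by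
    intro ε
    by_cases h : x + dirVec d ε ∈ A
    · exact hmax _ h
    · exact (h2 x hxA ε h).trans hpos.le
  have hl := h1 x hxA
  unfold lap at hl
  rw [← sum_dir] at hl
  have hdr : (0 : ℝ) < d := by exact_mod_cast hd
  have hall : ∀ ε : Dir d, f (x + dirVec d ε) = f x2 := by
    by_contra hne
    push Not at hne
    obtain ⟨ε, hε⟩ := hne
    have hlt : ∑ ε : Dir d, f (x + dirVec d ε) < ∑ ε : Dir d, f x2 :=
      Finset.sum_lt_sum (fun ε _ => hle ε) ⟨ε, Finset.mem_univ _, lt_of_le_of_ne (hle ε) hε⟩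
    have : ∑ ε : Dir d, f x2 = 2 * d * f x2 := by
      rw [Finset.sum_const, Finset.card_univ, Fintype.card_prod, Fintype.card_fin, Fintype.card_bool, nsmul_eq_mul]
      push_cast; ring
    rw [this] at hlt
    have h3 : (1 / (2 * (d : ℝ))) * ∑ ε : Dir d, f (x + dirVec d ε) < f x2 := by
      rw [one_div_mul_eq_div, div_lt_iff₀ (by positivity)]; linarith
    linarith
  have hn := hall (i0, true)
  have hmem : x + dirVec d (i0, true) ∈ A := by
    by_contra h
    have := h2 x hxA _ h
    linarith
  have := hxm _ ⟨hmem, hn⟩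
  simp [dirVec, unitVec] at this

/-- Extension by zero. -/
def ext0 {d : ℕ} (A : Set (Site d)) (g : A → ℝ) (x : Site d) : ℝ :=
  if h : x ∈ A then g ⟨x, h⟩ else 0

lemma exists_exit {d : ℕ} (hd : 1 ≤ d) (A : Set (Site d)) (hA : A.Finite) :
    ∃ e, IsExitFun d A e := by
  have : Fintype A := hA.fintype
  have hadd : ∀ g g' : A → ℝ, ∀ x, ext0 A (g + g') x = ext0 A g x + ext0 A g' x := by
    intro g g' x; unfold ext0; split_ifs <;> simp
  have hsmul : ∀ (c : ℝ) (g : A → ℝ), ∀ x, ext0 A (c • g) x = c * ext0 A g x := by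
    intro c g x; unfold ext0; split_ifs <;> simp
  let L : (A → ℝ) →ₗ[ℝ] (A → ℝ) :=
    { toFun := fun g x => lap (ext0 A g) x
      map_add' := by
        intro g g'; funext x
        simp only [lap, hadd, Pi.add_apply]
        have : ∀ a b c e : ℝ, (a + b) + (c + e) = (a + c) + (b + e) := by intros; ring
        simp only [this _ _ (ext0 A g _), Finset.sum_add_distrib]; ring
      map_smul' := by
        intro c g; funext x
        simp only [lap, hsmul, Pi.smul_apply, smul_eq_mul, RingHom.id_apply, ← mul_add, ← Finset.mul_sum]
        ring }
  have hinj : Function.Injective L := by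
    rw [← LinearMap.ker_eq_bot, LinearMap.ker_eq_bot']
    intro g hg
    have hl : ∀ x ∈ A, lap (ext0 A g) x = 0 := fun x hx => congrFun hg ⟨x, hx⟩
    have hout : ∀ x, x ∉ A → ext0 A g x = 0 := fun x hx => by simp [ext0, hx]
    have h1 := maxp hd A hA (ext0 A g) (fun x hx => (hl x hx).ge) (fun x _ ε h => (hout _ h).le)
    have h2 := maxp hd A hA (fun y => 0 - ext0 A g y)
      (fun x hx => by rw [lap_sub (fun _ => 0), lap_const hd, hl x hx]; simp)
      (fun x _ ε h => by simp [hout _ h])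
    funext x
    have e : ext0 A g x = g x := by simp [ext0]
    have a := h1 x x.2
    have b := h2 x x.2
    simp only [Pi.zero_apply]
    linarith
  obtain ⟨g, hg⟩ := (LinearMap.injective_iff_surjective.mp hinj) (fun _ => -1)
  exact ⟨ext0 A g, fun x hx => by simp [ext0, hx], fun x hx => congrFun hg ⟨x, hx⟩⟩

lemma exit_spec {d : ℕ} (hd : 1 ≤ d) (A : Set (Site d)) (hA : A.Finite) :
    IsExitFun d A (exitFun d A) := by
  have h := exists_exit hd A hA
  unfold exitFun
  rw [dif_pos h]
  exact h.choose_spec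

lemma exit_lap {d : ℕ} (hd : 1 ≤ d) (A : Set (Site d)) (hA : A.Finite) (x) (hx : x ∈ A) :
    lap (exitFun d A) x = -1 := (exit_spec hd A hA).2 x hx

lemma exit_out {d : ℕ} (hd : 1 ≤ d) (A : Set (Site d)) (hA : A.Finite) (x) (hx : x ∉ A) :
    exitFun d A x = 0 := (exit_spec hd A hA).1 x hx

lemma exit_nonneg {d : ℕ} (hd : 1 ≤ d) (A : Set (Site d)) (hA : A.Finite) (x) :
    0 ≤ exitFun d A x := by
  by_cases hx : x ∈ A
  · have := maxp hd A hA (fun y => 0 - exitFun d A y)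
      (fun x hx => by rw [lap_sub (fun _ => 0), lap_const hd, exit_lap hd A hA x hx]; norm_num)
      (fun x _ ε h => by simp [exit_out hd A hA _ h]) x hx
    linarith
  · exact (exit_out hd A hA x hx).ge

/-- Comparison with superlevel sets. -/
lemma superlevel {d : ℕ} (hd : 1 ≤ d) (A S : Set (Site d)) (hA : A.Finite) (hSA : S ⊆ A) (t : ℝ)
    (hS : ∀ x, x ∉ S → exitFun d A x ≤ t) (x : Site d) :
    exitFun d A x - t ≤ exitFun d S x := by
  have hSf := hA.subset hSA
  by_cases hx : x ∈ S
  · have := maxp hd S hSf (fun y => (exitFun d A y - t) - exitFun d S y)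
      (fun x hx => by
        rw [lap_sub (fun y => exitFun d A y - t), lap_sub (exitFun d A) (fun _ => t), lap_const hd,
          exit_lap hd A hA x (hSA hx), exit_lap hd S hSf x hx]; norm_num)
      (fun x _ ε h => by rw [exit_out hd S hSf _ h]; linarith [hS _ h]) x hx
    linarith
  · rw [exit_out hd S hSf x hx]; linarith [hS x hx]

lemma chain {d : ℕ} (hd : 1 ≤ d) (A : Finset (Site d)) (b : ℕ → ℝ) (o : Site d)
    (hb : ∀ S : Finset (Site d), S ⊆ A → 1 ≤ S.card → exitFun d (S : Set (Site d)) o ≤ b S.card) :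
    ∀ k : ℕ, ∀ S : Finset (Site d), S ⊆ A → S.card = k → ∀ t : ℝ,
      (∀ x, x ∉ S → exitFun d (A : Set (Site d)) x ≤ t) →
      (∀ x ∈ S, t ≤ exitFun d (A : Set (Site d)) x) →
      k * exitFun d (A : Set (Site d)) o - t - ∑ x ∈ S, exitFun d (A : Set (Site d)) x
        + exitFun d (A : Set (Site d)) o ≤ ∑ j ∈ Finset.Icc 1 k, b j := by
  intro k
  induction k with
  | zero =>
    intro S _ hc t ht ht'
    rw [Finset.card_eq_zero] at hc
    subst hc
    have := ht o (by simp)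
    simp; linarith
  | succ k ih =>
    intro S hSA hc t ht ht'
    have hne : S.Nonempty := Finset.card_pos.mp (by omega)
    obtain ⟨x0, hx0, hmin⟩ := Finset.exists_min_image S (exitFun d (A : Set (Site d))) hne
    have hk := ih (S.erase x0) ((Finset.erase_subset _ _).trans hSA)
      (by rw [Finset.card_erase_of_mem hx0, hc]; rfl)
      (exitFun d (A : Set (Site d)) x0)
      (by
        intro x hx
        by_cases hxS : x ∈ S
        · have : x = x0 := by by_contra hne; exact hx (Finset.mem_erase.mpr ⟨hne, hxS⟩)
          rw [this]
        · exact (ht x hxS).trans (ht' x0 hx0))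
      (fun x hx => hmin x (Finset.mem_of_mem_erase hx))
    have hfx := superlevel hd A S A.finite_toSet (by exact_mod_cast hSA) t (by simpa using ht) o
    have hbb := hb S hSA (by omega)
    rw [hc] at hbb
    rw [Finset.sum_Icc_succ_top (by omega), ← Finset.add_sum_erase S _ hx0]
    push_cast
    linarith

/-- The squared ℓ² distance between `f` and its translate by `v`. -/
def qd {d : ℕ} (f : Site d → ℝ) (v : Site d) : ℝ := ∑' x, (f (x + v) - f x) ^ 2

lemma sm2 {d : ℕ} {f : Site d → ℝ} (hf : f.support.Finite) (v w : Site d) (G : ℝ → ℝ → ℝ)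
    (hG : G 0 0 = 0) : Summable (fun x => G (f (x + v)) (f (x + w))) := by
  have h : ∀ u : Site d, {x | f (x + u) ≠ 0}.Finite := fun u =>
    hf.preimage (f := fun x => x + u) (add_left_injective u).injOn
  refine summable_of_hasFiniteSupport (((h v).union (h w)).subset ?_)
  intro x hx
  by_contra hcon
  simp only [Set.mem_union, Set.mem_ofPred_eq, not_or, not_not] at hcon
  exact hx (by simp only [hcon.1, hcon.2, hG])

lemma sm1 {d : ℕ} {f : Site d → ℝ} (hf : f.support.Finite) (v : Site d) (G : ℝ → ℝ → ℝ)
    (hG : G 0 0 = 0) : Summable (fun x => G (f (x + v)) (f x)) := by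
  simpa using sm2 hf v 0 G hG

lemma tsum_shift {d : ℕ} (g : Site d → ℝ) (v : Site d) : ∑' x, g (x + v) = ∑' x, g x :=
  (Equiv.addRight v).tsum_eq g

lemma qd_add {d : ℕ} {f : Site d → ℝ} (hf : f.support.Finite) (v w : Site d) {a b M : ℝ}
    (ha : 0 < a) (hb : 0 < b) (hv : qd f v ≤ a ^ 2 * M) (hw : qd f w ≤ b ^ 2 * M) :
    qd f (v + w) ≤ (a + b) ^ 2 * M := by
  have s1 := sm1 hf (v + w) (fun p q => (p - q) ^ 2) (by simp)
  have s2 := sm1 hf v (fun p q => (p - q) ^ 2) (by simp)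
  have s3 := sm2 hf (v + w) v (fun p q => (p - q) ^ 2) (by simp)
  have e3 : ∑' x, (f (x + (v + w)) - f (x + v)) ^ 2 = qd f w := by
    unfold qd
    rw [← tsum_shift (fun x => (f (x + w) - f x) ^ 2) v]
    simp only [add_assoc]
  have key : qd f (v + w) ≤ (1 + b / a) * qd f v + (1 + a / b) * qd f w := by
    rw [← e3]
    unfold qd
    rw [← tsum_mul_left, ← tsum_mul_left, ← (s2.mul_left _).tsum_add (s3.mul_left _)]
    refine s1.tsum_le_tsum (fun x => ?_) ((s2.mul_left _).add (s3.mul_left _))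
    set X := f (x + v) - f x
    set Y := f (x + (v + w)) - f (x + v)
    have hXY : f (x + (v + w)) - f x = X + Y := by simp only [X, Y]; ring
    rw [hXY]
    have : (1 + b / a) * X ^ 2 + (1 + a / b) * Y ^ 2 - (X + Y) ^ 2 = (b * X - a * Y) ^ 2 / (a * b) := by
      field_simp; ring
    have h0 : 0 ≤ (b * X - a * Y) ^ 2 / (a * b) := by positivity
    linarith
  have e1 : (1 + b / a) * (a ^ 2 * M) + (1 + a / b) * (b ^ 2 * M) = (a + b) ^ 2 * M := by
    field_simp; ring
  have h1 : (1 + b / a) * qd f v ≤ (1 + b / a) * (a ^ 2 * M) := by gcongr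
  have h2 : (1 + a / b) * qd f w ≤ (1 + a / b) * (b ^ 2 * M) := by gcongr
  linarith

lemma qd_zero {d : ℕ} (f : Site d → ℝ) : qd f 0 = 0 := by simp [qd]

lemma qd_nonneg {d : ℕ} (f : Site d → ℝ) (v) : 0 ≤ qd f v := tsum_nonneg (fun _ => sq_nonneg _)

lemma qd_nsmul {d : ℕ} {f : Site d → ℝ} (hf : f.support.Finite) (v : Site d) {M : ℝ}
    (hv : qd f v ≤ M) (m : ℕ) : qd f (m • v) ≤ ((m : ℝ) + 1) ^ 2 * M := by
  have hM := (qd_nonneg f v).trans hv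
  induction m with
  | zero => simpa [qd_zero] using hM
  | succ m ih =>
    rw [succ_nsmul]
    push_cast
    exact qd_add hf _ _ (by positivity) one_pos ih (by simpa using hv)

lemma qd_sum {d : ℕ} {f : Site d → ℝ} (hf : f.support.Finite) {M : ℝ}
    (hv : ∀ i, qd f (unitVec d i) ≤ M) (hM : 0 ≤ M) (c : Fin d → ℕ) (L : ℕ) (hL : 1 ≤ L)
    (hc : ∀ i, c i < L) (s : Finset (Fin d)) :
    qd f (∑ i ∈ s, c i • unitVec d i) ≤ (1 + s.card * (L : ℝ)) ^ 2 * M := by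
  induction s using Finset.induction_on with
  | empty => simpa [qd_zero] using hM
  | insert i s hi ih =>
    have hLr : (0 : ℝ) < L := by exact_mod_cast hL
    rw [Finset.sum_insert hi, Finset.card_insert_of_notMem hi, add_comm]
    have h1 : qd f (c i • unitVec d i) ≤ (L : ℝ) ^ 2 * M := by
      refine (qd_nsmul hf _ (hv i) (c i)).trans ?_
      have : (c i : ℝ) + 1 ≤ L := by exact_mod_cast hc i
      gcongr
    have := qd_add hf _ _ (by positivity) hLr ih h1
    push_cast
    convert this using 2
    ring

lemma qd_box {d : ℕ} {f : Site d → ℝ} (hf : f.support.Finite) {M : ℝ}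
    (hv : ∀ i, qd f (unitVec d i) ≤ M) (hM : 0 ≤ M) (L : ℕ) (hL : 1 ≤ L) (v : Site d)
    (hvL : ∀ i, 0 ≤ v i ∧ v i < L) : qd f v ≤ (1 + d * (L : ℝ)) ^ 2 * M := by
  have := qd_sum hf hv hM (fun i => (v i).toNat) L hL (fun i => by have := hvL i; omega) Finset.univ
  rw [Finset.card_univ, Fintype.card_fin] at this
  convert this using 2
  funext j
  rw [Finset.sum_apply]
  simp [unitVec, hvL]

lemma qd_expand {d : ℕ} {f : Site d → ℝ} (hf : f.support.Finite) (v : Site d) :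
    qd f v = 2 * ∑' x, f x ^ 2 - 2 * ∑' x, f (x + v) * f x := by
  have s1 := sm1 hf v (fun p q => p ^ 2) (by simp)
  have s2 := sm1 hf v (fun p q => q ^ 2) (by simp)
  have s3 := sm1 hf v (fun p q => p * q) (by simp)
  have e1 : ∑' x, f (x + v) ^ 2 = ∑' x, f x ^ 2 := tsum_shift (fun x => f x ^ 2) v
  have : qd f v = ∑' x, ((f (x + v) ^ 2 + f x ^ 2) - 2 * (f (x + v) * f x)) := by
    unfold qd; congr 1; funext x; ring
  rw [this, (s1.add s2).tsum_sub (s3.mul_left _), s1.tsum_add s2, tsum_mul_left, e1]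
  ring

lemma qd_neg {d : ℕ} (f : Site d → ℝ) (v : Site d) : qd f (-v) = qd f v := by
  unfold qd
  rw [← tsum_shift (fun x => (f (x + -v) - f x) ^ 2) v]
  congr 1; funext x
  simp only [neg_add_cancel_right, add_assoc, add_neg_cancel, add_zero]
  ring

/-- Faber–Krahn type inequality. -/
lemma faber {d : ℕ} (A : Finset (Site d)) {f : Site d → ℝ}
    (hout : ∀ x, x ∉ A → f x = 0) (hf0 : ∀ x, 0 ≤ f x) {M : ℝ}
    (hv : ∀ i, qd f (unitVec d i) ≤ M) (hM : 0 ≤ M) (L : ℕ) (hL : 1 ≤ L)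
    (hLA : 2 * A.card ≤ L ^ d) :
    ∑' x, f x ^ 2 ≤ (1 + d * (L : ℝ)) ^ 2 * M ∧
    (∑ x ∈ A, f x) ^ 2 ≤ A.card * ∑' x, f x ^ 2 := by
  have hf : f.support.Finite := A.finite_toSet.subset (fun x hx => by
    by_contra h; exact hx (hout x (by simpa using h)))
  have hN : ∑' x, f x ^ 2 = ∑ x ∈ A, f x ^ 2 := tsum_eq_sum (fun x hx => by simp [hout x hx])
  have hS : ∑' x, f x = ∑ x ∈ A, f x := tsum_eq_sum (fun x hx => by simp [hout x hx])
  have hcs : (∑ x ∈ A, f x) ^ 2 ≤ A.card * ∑' x, f x ^ 2 := by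
    rw [hN]; exact sq_sum_le_card_mul_sum_sq
  refine ⟨?_, hcs⟩
  set N := ∑' x, f x ^ 2
  set S := ∑ x ∈ A, f x
  let V : Finset (Site d) := Fintype.piFinset (fun _ : Fin d => Finset.Ico (0 : ℤ) L)
  have hVc : (V.card : ℝ) = (L : ℝ) ^ d := by simp [V]
  have h1 : ∑ v ∈ V, qd f v ≤ ∑ v ∈ V, (1 + d * (L : ℝ)) ^ 2 * M :=
    Finset.sum_le_sum (fun v hv' => qd_box hf hv hM L hL v (by simpa [V] using hv'))
  have hs : ∀ v : Site d, Summable (fun x => f (x + v) * f x) := fun v =>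
    sm1 hf v (fun p q => p * q) (by simp)
  have hsf : Summable f := summable_of_hasFiniteSupport hf
  have h2 : ∑ v ∈ V, ∑' x, f (x + v) * f x ≤ S ^ 2 := by
    rw [← Summable.tsum_finsetSum (fun v _ => hs v)]
    have e : ∀ x, ∑ v ∈ V, f (x + v) * f x ≤ S * f x := by
      intro x
      rw [← Finset.sum_mul]
      refine mul_le_mul_of_nonneg_right ?_ (hf0 x)
      have hsh : Summable (fun v => f (x + v)) := (Equiv.addLeft x).summable_iff.mpr hsf
      refine (hsh.sum_le_tsum V (fun v _ => hf0 _)).trans ?_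
      rw [← hS]
      exact ((Equiv.addLeft x).tsum_eq f).le
    refine (Summable.tsum_le_tsum e (summable_sum (fun v _ => hs v)) (hsf.mul_left S)).trans ?_
    rw [tsum_mul_left, hS, sq]
  simp only [qd_expand hf] at h1
  rw [Finset.sum_sub_distrib, ← Finset.mul_sum, Finset.sum_const, Finset.sum_const, nsmul_eq_mul,
    nsmul_eq_mul, hVc] at h1
  rw [← Finset.mul_sum] at h1
  change 2 * ((L : ℝ) ^ d * N) - _ ≤ _ at h1
  have hLd : (0 : ℝ) < (L : ℝ) ^ d := by
    have : (0 : ℝ) < L := by exact_mod_cast hL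
    positivity
  have hN0 : 0 ≤ N := tsum_nonneg (fun _ => sq_nonneg _)
  have h3 : 2 * (A.card : ℝ) * N ≤ (L : ℝ) ^ d * N := by
    refine mul_le_mul_of_nonneg_right ?_ hN0
    exact_mod_cast hLA
  have h4 : (L : ℝ) ^ d * N ≤ (L : ℝ) ^ d * ((1 + d * (L : ℝ)) ^ 2 * M) := by
    linarith
  exact le_of_mul_le_mul_left h4 hLd

lemma energy {d : ℕ} (hd : 1 ≤ d) (A : Finset (Site d)) :
    ∑ i, qd (exitFun d (A : Set (Site d))) (unitVec d i)
      = 2 * d * ∑ x ∈ A, exitFun d (A : Set (Site d)) x := by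
  set f := exitFun d (A : Set (Site d)) with hfdef
  have hout : ∀ x, x ∉ A → f x = 0 := fun x hx => exit_out hd _ A.finite_toSet x (by simpa using hx)
  have hf : f.support.Finite := A.finite_toSet.subset (fun x hx => by
    by_contra h; exact hx (hout x (by simpa using h)))
  have hdr : (d : ℝ) ≠ 0 := by positivity
  have hs : ∀ v : Site d, Summable (fun x => f (x + v) * f x) := fun v =>
    sm1 hf v (fun p q => p * q) (by simp)
  have hs2 : Summable (fun x => f x ^ 2) := sm1 hf 0 (fun p q => q ^ 2) (by simp)
  have hS : ∑' x, f x = ∑ x ∈ A, f x := tsum_eq_sum (fun x hx => by simp [hout x hx])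
  have hpt : ∀ x, ∑ i, (f (x + unitVec d i) * f x + f (x + -unitVec d i) * f x)
      = 2 * d * (f x ^ 2 - f x) := by
    intro x
    by_cases hx : x ∈ A
    · have := exit_lap hd _ A.finite_toSet x (by simpa using hx)
      rw [← hfdef] at this
      unfold lap at this
      simp only [← add_mul, ← Finset.sum_mul, ← sub_eq_add_neg]
      have h2 : (∑ i, (f (x + unitVec d i) + f (x - unitVec d i))) = 2 * d * (f x - 1) := by
        field_simp at this
        linarith
      rw [h2]; ring
    · simp [hout x hx]
  have hsym : ∀ v, ∑' x, f (x + -v) * f x = ∑' x, f (x + v) * f x := by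
    intro v
    rw [← tsum_shift (fun x => f (x + -v) * f x) v]
    congr 1; funext x
    simp only [neg_add_cancel_right, add_assoc, add_neg_cancel, add_zero]
    ring
  have hsum : ∑' x, ∑ i, (f (x + unitVec d i) * f x + f (x + -unitVec d i) * f x)
      = ∑ i, 2 * ∑' x, f (x + unitVec d i) * f x := by
    rw [Summable.tsum_finsetSum (fun i _ => (hs _).add (hs _))]
    refine Finset.sum_congr rfl (fun i _ => ?_)
    rw [(hs _).tsum_add (hs _), hsym]; ring
  simp only [hpt] at hsum
  have hsf : Summable f := summable_of_hasFiniteSupport hf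
  rw [tsum_mul_left, hs2.tsum_sub hsf, hS] at hsum
  simp only [qd_expand hf]
  rw [Finset.sum_sub_distrib, ← hsum]
  simp; ring

lemma sum_exit_le {d : ℕ} (hd : 1 ≤ d) (A : Finset (Site d)) (L : ℕ) (hL : 1 ≤ L)
    (hLA : 2 * A.card ≤ L ^ d) :
    ∑ x ∈ A, exitFun d (A : Set (Site d)) x ≤ 2 * d * A.card * (1 + d * (L : ℝ)) ^ 2 := by
  have hE := energy hd A
  set f := exitFun d (A : Set (Site d)) with hfdef
  set S := ∑ x ∈ A, f x
  have hf0 : ∀ x, 0 ≤ f x := exit_nonneg hd _ A.finite_toSet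
  have hS0 : 0 ≤ S := Finset.sum_nonneg (fun x _ => hf0 x)
  obtain ⟨h1, h2⟩ := faber A (f := f) (M := 2 * d * S)
    (fun x hx => exit_out hd _ A.finite_toSet x (by simpa using hx)) hf0
    (fun i => by
      rw [← hE]
      exact Finset.single_le_sum (f := fun i => qd f (unitVec d i)) (fun i _ => qd_nonneg f _) (Finset.mem_univ i))
    (by positivity) L hL hLA
  have h3 : S * S ≤ (2 * d * A.card * (1 + d * (L : ℝ)) ^ 2) * S := by
    have : (A.card : ℝ) * ∑' x, f x ^ 2 ≤ A.card * ((1 + d * (L : ℝ)) ^ 2 * (2 * d * S)) := by gcongr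
    change S ^ 2 ≤ _ at h2
    nlinarith
  rcases hS0.eq_or_lt with h | h
  · rw [← h]; positivity
  · exact le_of_mul_le_mul_right h3 h

lemma grad_le {d : ℕ} (hd : 1 ≤ d) (A : Finset (Site d)) (L : ℕ) (hL : 1 ≤ L)
    (hLA : 2 * A.card ≤ L ^ d) :
    ∑ x ∈ A, ∑ ε : Dir d, |exitFun d (A : Set (Site d)) (x + dirVec d ε) - exitFun d (A : Set (Site d)) x|
      ≤ 4 * d ^ 2 * A.card * (1 + d * (L : ℝ)) := by
  have hE := energy hd A
  have hSle := sum_exit_le hd A L hL hLA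
  set f := exitFun d (A : Set (Site d)) with hfdef
  set S := ∑ x ∈ A, f x
  have hout : ∀ x, x ∉ A → f x = 0 := fun x hx => exit_out hd _ A.finite_toSet x (by simpa using hx)
  have hf : f.support.Finite := A.finite_toSet.subset (fun x hx => by
    by_contra h; exact hx (hout x (by simpa using h)))
  have hdr : (1 : ℝ) ≤ d := by exact_mod_cast hd
  rw [← Finset.sum_product']
  have hcs := sq_sum_le_card_mul_sum_sq (s := A ×ˢ (Finset.univ : Finset (Dir d)))
    (f := fun p => |f (p.1 + dirVec d p.2) - f p.1|)
  have hcard : ((A ×ˢ (Finset.univ : Finset (Dir d))).card : ℝ) = 2 * d * A.card := by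
    rw [Finset.card_product, Finset.card_univ, Fintype.card_prod, Fintype.card_fin, Fintype.card_bool]
    push_cast; ring
  have hq : ∑ p ∈ A ×ˢ (Finset.univ : Finset (Dir d)), |f (p.1 + dirVec d p.2) - f p.1| ^ 2
      ≤ 4 * d * S := by
    simp only [sq_abs]
    rw [Finset.sum_product_right]
    have h1 : ∀ ε : Dir d, ∑ x ∈ A, (f (x + dirVec d ε) - f x) ^ 2 ≤ qd f (unitVec d ε.1) := by
      intro ε
      have : qd f (unitVec d ε.1) = qd f (dirVec d ε) := by
        unfold dirVec; split_ifs
        · rfl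
        · rw [qd_neg]
      rw [this]
      exact (sm1 hf (dirVec d ε) (fun p q => (p - q) ^ 2) (by simp)).sum_le_tsum A (fun _ _ => sq_nonneg _)
    refine (Finset.sum_le_sum (fun ε _ => h1 ε)).trans ?_
    rw [Fintype.sum_prod_type]
    simp only [Fintype.sum_bool, Finset.sum_add_distrib]
    rw [hE]; linarith
  rw [hcard] at hcs
  refine le_of_sq_le_sq ?_ (by positivity)
  refine hcs.trans ?_
  calc 2 * (d : ℝ) * A.card * _ ≤ 2 * (d : ℝ) * A.card * (4 * d * (2 * d * A.card * (1 + d * (L : ℝ)) ^ 2)) := by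
        refine mul_le_mul_of_nonneg_left (hq.trans ?_) (by positivity)
        exact mul_le_mul_of_nonneg_left hSle (by positivity)
    _ = 16 * (d : ℝ) ^ 3 * ((A.card : ℝ) * (1 + d * (L : ℝ))) ^ 2 := by ring
    _ ≤ 16 * (d : ℝ) ^ 4 * ((A.card : ℝ) * (1 + d * (L : ℝ))) ^ 2 := by
        gcongr
        norm_num
    _ = _ := by ring

/-- The potential collected by all rotors used so far. -/
def Wp {d : ℕ} (r : Site d → ℕ → Dir d) (B : Finset (Site d)) (f : Site d → ℝ) (c : Site d → ℕ) : ℝ :=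
  ∑ x ∈ B, ∑ i ∈ Finset.range (c x), (f (x + dirVec d (r x i)) - f x)

lemma Wp_step {d : ℕ} (r : Site d → ℕ → Dir d) (B : Finset (Site d)) (f : Site d → ℝ)
    (c : Site d → ℕ) (p : Site d) (hp : p ∈ B) :
    Wp r B f (Function.update c p (c p + 1)) = Wp r B f c + f (p + dirVec d (r p (c p))) - f p := by
  unfold Wp
  rw [← Finset.add_sum_erase B _ hp, ← Finset.add_sum_erase B _ hp, Function.update_self,
    Finset.sum_range_succ]
  have : ∀ x ∈ B.erase p, (∑ i ∈ Finset.range (Function.update c p (c p + 1) x),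
      (f (x + dirVec d (r x i)) - f x)) = ∑ i ∈ Finset.range (c x), (f (x + dirVec d (r x i)) - f x) := by
    intro x hx
    rw [Function.update_of_ne (Finset.ne_of_mem_erase hx)]
  rw [Finset.sum_congr rfl this]
  ring

lemma cnt_step {d : ℕ} (B : Finset (Site d)) (c : Site d → ℕ) (p : Site d) (hp : p ∈ B) :
    ∑ x ∈ B, Function.update c p (c p + 1) x = (∑ x ∈ B, c x) + 1 := by
  rw [← Finset.add_sum_erase B _ hp, ← Finset.add_sum_erase B (fun x => c x) hp, Function.update_self]
  have : ∀ x ∈ B.erase p, Function.update c p (c p + 1) x = c x := fun x hx =>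
    Function.update_of_ne (Finset.ne_of_mem_erase hx) _ _
  rw [Finset.sum_congr rfl this]
  ring

lemma walk_inv {d : ℕ} (r : Site d → ℕ → Dir d) (B : Finset (Site d)) (f : Site d → ℝ)
    (c : Site d → ℕ) (t : ℕ) (h : ∀ s < t, (walkState r c s).1 ∈ B) :
    Wp r B f (walkState r c t).2 = Wp r B f c + f (walkState r c t).1 - f 0 ∧
    ∑ x ∈ B, (walkState r c t).2 x = (∑ x ∈ B, c x) + t := by
  induction t with
  | zero => simp [walkState]
  | succ t ih =>
    obtain ⟨h1, h2⟩ := ih (fun s hs => h s (by omega))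
    have hp := h t (by omega)
    have hst : walkState r c (t + 1) = rstep r (walkState r c t) := by
      simp only [walkState, Function.iterate_succ_apply']
    rw [hst]
    unfold rstep
    constructor
    · rw [Wp_step r B f _ _ hp, h1]; ring
    · simp only
      rw [cnt_step B _ _ hp, h2]; ring

lemma disc_bound {d : ℕ} (hd : 1 ≤ d) {D : ℝ} {r : Site d → ℕ → Dir d} (hD : HasDiscrepancy d D r)
    (hD0 : 0 ≤ D) (f : Site d → ℝ) (x : Site d) (m : ℕ) :
    |∑ i ∈ Finset.range m, (f (x + dirVec d (r x i)) - f x) - m * lap f x|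
      ≤ D * ∑ ε : Dir d, |f (x + dirVec d ε) - f x| := by
  have hdr : (d : ℝ) ≠ 0 := by positivity
  rcases Nat.eq_zero_or_pos m with h | h
  · subst h; simp; positivity
  have e1 : ∑ i ∈ Finset.range m, (f (x + dirVec d (r x i)) - f x)
      = ∑ ε : Dir d, (({i | i < m ∧ r x i = ε} : Set ℕ).ncard : ℝ) * (f (x + dirVec d ε) - f x) := by
    rw [← Finset.sum_fiberwise (Finset.range m) (fun i => r x i)]
    refine Finset.sum_congr rfl (fun ε _ => ?_)
    have : ({i | i < m ∧ r x i = ε} : Set ℕ) = ((Finset.range m).filter (fun i => r x i = ε) : Set ℕ) := by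
      ext i; simp
    rw [this, Set.ncard_coe_finset, ← nsmul_eq_mul, ← Finset.sum_const]
    refine Finset.sum_congr rfl (fun i hi => ?_)
    rw [(Finset.mem_filter.mp hi).2]
  have e2 : m * lap f x = ∑ ε : Dir d, ((m : ℝ) / (2 * d)) * (f (x + dirVec d ε) - f x) := by
    rw [← Finset.mul_sum, Finset.sum_sub_distrib, sum_dir, Finset.sum_const, Finset.card_univ,
      Fintype.card_prod, Fintype.card_fin, Fintype.card_bool, nsmul_eq_mul]
    unfold lap
    push_cast
    field_simp
  rw [e1, e2, ← Finset.sum_sub_distrib, Finset.mul_sum]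
  refine (Finset.abs_sum_le_sum_abs _ _).trans (Finset.sum_le_sum (fun ε _ => ?_))
  rw [← sub_mul, abs_mul]
  exact mul_le_mul_of_nonneg_right (hD x ε m h) (abs_nonneg _)

lemma cnt_le {d : ℕ} (hd : 1 ≤ d) {D : ℝ} {r : Site d → ℕ → Dir d} (hD : HasDiscrepancy d D r)
    (hD0 : 0 ≤ D) (B : Finset (Site d)) (c : Site d → ℕ) :
    ((∑ x ∈ B, c x : ℕ) : ℝ) ≤ - Wp r B (exitFun d (B : Set (Site d))) c
      + D * ∑ x ∈ B, ∑ ε : Dir d, |exitFun d (B : Set (Site d)) (x + dirVec d ε) - exitFun d (B : Set (Site d)) x| := by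
  unfold Wp
  rw [Finset.mul_sum, ← Finset.sum_neg_distrib, ← Finset.sum_add_distrib]
  push_cast
  refine Finset.sum_le_sum (fun x hx => ?_)
  have h := (abs_le.mp (disc_bound hd hD hD0 (exitFun d (B : Set (Site d))) x (c x))).2
  rw [exit_lap hd _ B.finite_toSet x (by simpa using hx)] at h
  linarith

lemma walk_exits {d : ℕ} (hd : 1 ≤ d) {D : ℝ} {r : Site d → ℕ → Dir d} (hD : HasDiscrepancy d D r)
    (hD0 : 0 ≤ D) (B : Finset (Site d)) (c : Site d → ℕ) : ∃ t, (walkState r c t).1 ∉ B := by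
  by_contra hcon
  push Not at hcon
  set f := exitFun d (B : Set (Site d)) with hf
  set K := - Wp r B f c + f 0 + D * ∑ x ∈ B, ∑ ε : Dir d, |f (x + dirVec d ε) - f x| with hK
  obtain ⟨t, ht⟩ := exists_nat_gt K
  obtain ⟨h1, h2⟩ := walk_inv r B f c t (fun s _ => hcon s)
  have h3 := cnt_le hd hD hD0 B (walkState r c t).2
  rw [h2, ← hf, h1] at h3
  have h4 : 0 ≤ f (walkState r c t).1 := exit_nonneg hd _ B.finite_toSet _
  have h5 : (0 : ℝ) ≤ ((∑ x ∈ B, c x : ℕ) : ℝ) := by positivity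
  push_cast at h3 h5
  linarith

lemma exitSteps_spec {d : ℕ} (hd : 1 ≤ d) {D : ℝ} {r : Site d → ℕ → Dir d} (hD : HasDiscrepancy d D r)
    (hD0 : 0 ≤ D) (B : Finset (Site d)) (c : Site d → ℕ) :
    (walkState r c (exitSteps r (B : Set (Site d)) c)).1 ∉ B ∧
    ∀ s < exitSteps r (B : Set (Site d)) c, (walkState r c s).1 ∈ B := by
  have hne : {t | (walkState r c t).1 ∉ (B : Set (Site d))}.Nonempty := by
    simpa [Set.Nonempty] using walk_exits hd hD hD0 B c
  constructor
  · simpa [exitSteps] using Nat.sInf_mem hne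
  · intro s hs
    have := Nat.notMem_of_lt_sInf hs
    simpa using this

lemma agg_inv {d : ℕ} (hd : 1 ≤ d) {D : ℝ} {r : Site d → ℕ → Dir d} (hD : HasDiscrepancy d D r)
    (hD0 : 0 ≤ D) (n : ℕ) :
    ∃ A : Finset (Site d), (A : Set (Site d)) = (aggState r n).1 ∧ A.card = n + 1 ∧
      (∀ k < n, (aggState r k).1 ⊆ A) ∧
      ∀ (B : Finset (Site d)) (f : Site d → ℝ), (∀ k < n, (aggState r k).1 ⊆ B) →
        Wp r B f (aggState r n).2.1 = ∑ y ∈ A, f y - f 0 - n * f 0 ∧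
        ∑ x ∈ B, (aggState r n).2.1 x = totalSteps r n := by
  induction n with
  | zero => exact ⟨{0}, by simp [aggState], by simp, by simp, by simp [aggState, Wp, totalSteps]⟩
  | succ n ih =>
    obtain ⟨A, hA, hc, hsub, hinv⟩ := ih
    obtain ⟨he1, he2⟩ := exitSteps_spec hd hD hD0 A (aggState r n).2.1
    rw [hA] at he1 he2
    have hstate : aggState r (n + 1) = (insert (walkState r (aggState r n).2.1 (exitSteps r (aggState r n).1 (aggState r n).2.1)).1 (aggState r n).1,
      (walkState r (aggState r n).2.1 (exitSteps r (aggState r n).1 (aggState r n).2.1)).2,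
      (aggState r n).2.2 + exitSteps r (aggState r n).1 (aggState r n).2.1) := rfl
    set τ := exitSteps r (aggState r n).1 (aggState r n).2.1
    refine ⟨insert (walkState r (aggState r n).2.1 τ).1 A, ?_, ?_, ?_, ?_⟩
    · rw [hstate]; simp [hA]
    · rw [Finset.card_insert_of_notMem he1, hc]
    · intro k hk
      rcases Nat.lt_succ_iff_lt_or_eq.mp hk with h | h
      · exact (hsub k h).trans (by simp)
      · subst h; rw [← hA]; simp
    · intro B f hB
      obtain ⟨h1, h2⟩ := hinv B f (fun k hk => hB k (by omega))
      obtain ⟨h3, h4⟩ := walk_inv r B f (aggState r n).2.1 τ (fun s hs => by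
        have h := hB n (by omega)
        rw [← hA] at h
        exact_mod_cast h (he2 s hs))
      unfold totalSteps
      rw [hstate]
      simp only
      rw [h3, h4, h1, h2, Finset.sum_insert he1]
      refine ⟨?_, rfl⟩
      push_cast; ring

lemma T_le {d : ℕ} (hd : 1 ≤ d) {D : ℝ} {r : Site d → ℕ → Dir d} (hD : HasDiscrepancy d D r)
    (hD0 : 0 ≤ D) (n : ℕ) (hn : 1 ≤ n) :
    ∃ B : Finset (Site d), B.card = n ∧ (totalSteps r n : ℝ) ≤
      n * exitFun d (B : Set (Site d)) 0 - ∑ x ∈ B, exitFun d (B : Set (Site d)) x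
        + exitFun d (B : Set (Site d)) 0
        + D * ∑ x ∈ B, ∑ ε : Dir d, |exitFun d (B : Set (Site d)) (x + dirVec d ε) - exitFun d (B : Set (Site d)) x| := by
  obtain ⟨m, rfl⟩ : ∃ m, n = m + 1 := ⟨n - 1, by omega⟩
  obtain ⟨B, hB, hBc, hBs, -⟩ := agg_inv hd hD hD0 m
  obtain ⟨A, hA, hAc, hAs, hinv⟩ := agg_inv hd hD hD0 (m + 1)
  refine ⟨B, hBc, ?_⟩
  obtain ⟨h1, h2⟩ := hinv B (exitFun d (B : Set (Site d))) (fun k hk => by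
    rcases Nat.lt_succ_iff_lt_or_eq.mp hk with h | h
    · exact hBs k h
    · subst h; rw [hB])
  have h3 := cnt_le hd hD hD0 B (aggState r (m + 1)).2.1
  rw [h1, h2] at h3
  have hBA : B ⊆ A := by
    have := hAs m (by omega)
    rw [← hB] at this
    exact_mod_cast this
  have h4 : ∑ y ∈ A, exitFun d (B : Set (Site d)) y = ∑ y ∈ B, exitFun d (B : Set (Site d)) y :=
    (Finset.sum_subset hBA (fun x _ hx => exit_out hd _ B.finite_toSet x (by simpa using hx))).symm
  rw [h4] at h3
  linarith

lemma ballVol_pos (d : ℕ) : 0 < ballVol d := by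
  unfold ballVol
  exact ENNReal.toReal_pos (Metric.measure_ball_pos volume _ one_pos).ne' measure_ball_lt_top.ne

/-- Radius of the Euclidean ball of volume `n`. -/
def rad (d n : ℕ) : ℝ := ((n : ℝ) / ballVol d) ^ (1 / (d : ℝ))

lemma rad_nonneg (d n : ℕ) : 0 ≤ rad d n := Real.rpow_nonneg (div_nonneg (by positivity) (ballVol_pos d).le) _

lemma enorm_lt_rad {d n : ℕ} (hd : 1 ≤ d) {x : Site d} (hx : x ∈ lball d n) : enorm x < rad d n := by
  have hx' : ballVol d * enorm x ^ d < n := hx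
  have h0 : 0 ≤ enorm x := Real.sqrt_nonneg _
  have h1 : enorm x ^ d < (n : ℝ) / ballVol d := by
    rw [lt_div_iff₀ (ballVol_pos d)]; linarith
  have h2 : enorm x = (enorm x ^ d) ^ (1 / (d : ℝ)) := by
    rw [one_div, Real.pow_rpow_inv_natCast h0 (by omega)]
  rw [h2]
  exact Real.rpow_lt_rpow (by positivity) h1 (by positivity)

lemma nsq_nonneg {d : ℕ} (x : Site d) : 0 ≤ nsq x := Finset.sum_nonneg (fun _ _ => sq_nonneg _)

lemma abs_le_enorm {d : ℕ} (x : Site d) (i : Fin d) : |(x i : ℝ)| ≤ enorm x := by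
  apply Real.abs_le_sqrt
  exact Finset.single_le_sum (f := fun i => ((x i : ℝ)) ^ 2) (fun _ _ => sq_nonneg _) (Finset.mem_univ i)

lemma lball_finite {d : ℕ} (hd : 1 ≤ d) (n : ℕ) : (lball d n).Finite := by
  refine (Fintype.piFinset (fun _ : Fin d => Finset.Icc (-⌈rad d n⌉) ⌈rad d n⌉)).finite_toSet.subset ?_
  intro x hx
  simp only [Finset.mem_coe, Fintype.mem_piFinset, Finset.mem_Icc]
  intro i
  have h := (abs_le_enorm x i).trans (enorm_lt_rad hd hx).le
  have h2 := abs_le.mp (h.trans (Int.le_ceil _))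
  exact ⟨by exact_mod_cast h2.1, by exact_mod_cast h2.2⟩

lemma nsq_add {d : ℕ} (x : Site d) (i : Fin d) : nsq (x + unitVec d i) = nsq x + 2 * x i + 1 := by
  have h : ∀ j, (((x + unitVec d i) j : ℤ) : ℝ) ^ 2 = (x j : ℝ) ^ 2 + (if j = i then 2 * (x j : ℝ) + 1 else 0) := by
    intro j
    simp only [Pi.add_apply, unitVec]
    split_ifs <;> push_cast <;> ring
  simp only [nsq, h, Finset.sum_add_distrib, Finset.sum_ite_eq', Finset.mem_univ, if_true]
  ring

lemma nsq_sub {d : ℕ} (x : Site d) (i : Fin d) : nsq (x - unitVec d i) = nsq x - 2 * x i + 1 := by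
  have h : ∀ j, (((x - unitVec d i) j : ℤ) : ℝ) ^ 2 = (x j : ℝ) ^ 2 + (if j = i then -2 * (x j : ℝ) + 1 else 0) := by
    intro j
    simp only [Pi.sub_apply, unitVec]
    split_ifs <;> push_cast <;> ring
  simp only [nsq, h, Finset.sum_add_distrib, Finset.sum_ite_eq', Finset.mem_univ, if_true]
  ring

lemma lap_nsq {d : ℕ} (hd : 1 ≤ d) (x : Site d) : lap nsq x = 1 := by
  have hdr : (d : ℝ) ≠ 0 := by positivity
  have : ∀ i, nsq (x + unitVec d i) + nsq (x - unitVec d i) = 2 * nsq x + 2 := by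
    intro i; rw [nsq_add, nsq_sub]; ring
  unfold lap
  simp only [this, Finset.sum_const, Finset.card_univ, Fintype.card_fin, nsmul_eq_mul]
  field_simp; ring

lemma nsq_dir_le {d : ℕ} (x : Site d) (ε : Dir d) : nsq (x + dirVec d ε) ≤ (enorm x + 1) ^ 2 := by
  have h1 := abs_le.mp (abs_le_enorm x ε.1)
  have h2 : enorm x ^ 2 = nsq x := Real.sq_sqrt (nsq_nonneg x)
  unfold dirVec
  split_ifs
  · rw [nsq_add]; nlinarith
  · rw [← sub_eq_add_neg, nsq_sub]; nlinarith

lemma ball_exit_le {d n : ℕ} (hd : 1 ≤ d) (hn : 1 ≤ n) :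
    exitFun d (lball d n) 0 ≤ (rad d n + 1) ^ 2 := by
  have hfin := lball_finite hd n
  have h0 : (0 : Site d) ∈ lball d n := by
    have : ballVol d * enorm (0 : Site d) ^ d < n := by
      have : enorm (0 : Site d) = 0 := by simp [enorm, nsq]
      rw [this, zero_pow (by omega), mul_zero]
      exact_mod_cast hn
    exact this
  have := maxp hd _ hfin (fun y => exitFun d (lball d n) y - ((rad d n + 1) ^ 2 - nsq y))
    (fun x hx => by
      rw [lap_sub (exitFun d (lball d n)) (fun y => (rad d n + 1) ^ 2 - nsq y),
        lap_sub (fun _ => (rad d n + 1) ^ 2) nsq, lap_const hd, lap_nsq hd, exit_lap hd _ hfin x hx]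
      norm_num)
    (fun x hx ε h => by
      rw [exit_out hd _ hfin _ h]
      have h1 := nsq_dir_le x ε
      have h2 := enorm_lt_rad hd hx
      have h3 : 0 ≤ enorm x := Real.sqrt_nonneg _
      have : (enorm x + 1) ^ 2 ≤ (rad d n + 1) ^ 2 := by gcongr
      linarith) 0 h0
  have e : nsq (0 : Site d) = 0 := by simp [nsq]
  rw [e] at this
  linarith

lemma exit_bdd {d : ℕ} (hd : 1 ≤ d) (A : Finset (Site d)) (x : Site d) :
    exitFun d (A : Set (Site d)) x ≤ 2 * d * A.card * (1 + d * ((2 * A.card : ℕ) : ℝ)) ^ 2 := by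
  by_cases hx : x ∈ A
  · have hc : 1 ≤ A.card := Finset.card_pos.mpr ⟨x, hx⟩
    refine le_trans ?_ (sum_exit_le hd A (2 * A.card) (by omega) (Nat.le_self_pow (by omega) _))
    exact Finset.single_le_sum (f := exitFun d (A : Set (Site d))) (fun y _ => exit_nonneg hd _ A.finite_toSet y) hx
  · rw [exit_out hd _ A.finite_toSet x (by simpa using hx)]; positivity

lemma exit_le_phi {d : ℕ} (hd : 1 ≤ d) (S : Finset (Site d)) :
    exitFun d (S : Set (Site d)) 0 ≤ phi d S.card + exitFun d (lball d S.card) 0 := by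
  have h1 : exitFun d (S : Set (Site d)) 0 ≤ ebar d S :=
    le_csSup ⟨_, by rintro _ ⟨x, rfl⟩; exact exit_bdd hd S x⟩ ⟨0, rfl⟩
  have h2 : ebar d S - exitFun d (lball d S.card) 0 ≤ phi d S.card := by
    refine le_csSup ⟨2 * d * S.card * (1 + d * ((2 * S.card : ℕ) : ℝ)) ^ 2 - exitFun d (lball d S.card) 0, ?_⟩
      ⟨S, S.finite_toSet, Set.ncard_coe_finset S, rfl⟩
    rintro _ ⟨A, hA, hc, rfl⟩
    obtain ⟨A', rfl⟩ : ∃ A' : Finset (Site d), (A' : Set (Site d)) = A := ⟨hA.toFinset, by simp⟩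
    rw [Set.ncard_coe_finset] at hc
    rw [← hc]
    refine sub_le_sub_right (csSup_le (Set.range_nonempty _) ?_) _
    rintro _ ⟨x, rfl⟩
    exact exit_bdd hd A' x
  linarith

lemma sum_rpow_le {p : ℝ} (hp : 0 < p) (n : ℕ) :
    ∑ j ∈ Finset.Icc 1 n, (j : ℝ) ^ p ≤ (n : ℝ) ^ (p + 1) / (p + 1) + (n : ℝ) ^ p := by
  induction n with
  | zero => simp [Real.zero_rpow hp.ne', Real.zero_rpow (by positivity : p + 1 ≠ 0)]
  | succ n ih =>
    rw [Finset.sum_Icc_succ_top (by omega)]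
    have key : (n : ℝ) ^ p ≤ (((n + 1 : ℕ) : ℝ) ^ (p + 1) - (n : ℝ) ^ (p + 1)) / (p + 1) := by
      rcases Nat.eq_zero_or_pos n with h | h
      · subst h; simp [Real.zero_rpow hp.ne', Real.zero_rpow (by positivity : p + 1 ≠ 0)]; positivity
      have hn : (0 : ℝ) < n := by exact_mod_cast h
      have hb := one_add_mul_self_le_rpow_one_add (s := 1 / (n : ℝ)) (by
        have : 0 ≤ 1 / (n : ℝ) := by positivity
        linarith) (p := p + 1) (by linarith)
      have e : ((n + 1 : ℕ) : ℝ) = n * (1 + 1 / n) := by push_cast; field_simp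
      rw [e, Real.mul_rpow hn.le (by positivity), le_div_iff₀ (by positivity)]
      have h1 : (n : ℝ) ^ (p + 1) * (1 + (p + 1) * (1 / n)) ≤ (n : ℝ) ^ (p + 1) * (1 + 1 / (n : ℝ)) ^ (p + 1) := by
        gcongr
      have h2 : (n : ℝ) ^ (p + 1) = (n : ℝ) ^ p * n := Real.rpow_add_one hn.ne' p
      have h3 : (n : ℝ) ^ (p + 1) * (1 + (p + 1) * (1 / n)) = (n : ℝ) ^ (p + 1) + (n : ℝ) ^ p * (p + 1) := by
        rw [h2]; field_simp
      linarith
    rw [sub_div] at key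
    linarith

lemma exists_L {d n : ℕ} (hd : 1 ≤ d) (hn : 1 ≤ n) :
    ∃ L : ℕ, 1 ≤ L ∧ 2 * n ≤ L ^ d ∧ (L : ℝ) ≤ 4 * (n : ℝ) ^ (1 / (d : ℝ)) := by
  have hd1 : (1 : ℝ) ≤ d := by exact_mod_cast hd
  have hn1 : (1 : ℝ) ≤ n := by exact_mod_cast hn
  have hn2 : 1 ≤ (n : ℝ) ^ (1 / (d : ℝ)) := Real.one_le_rpow hn1 (by positivity)
  have h2 : (2 : ℝ) ^ (1 / (d : ℝ)) ≤ 2 := by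
    calc (2 : ℝ) ^ (1 / (d : ℝ)) ≤ (2 : ℝ) ^ (1 : ℝ) := by
          apply Real.rpow_le_rpow_of_exponent_le (by norm_num)
          rw [div_le_one (by positivity)]; exact hd1
      _ = 2 := by simp
  have h3 : (2 * (n : ℝ)) ^ (1 / (d : ℝ)) ≤ 2 * (n : ℝ) ^ (1 / (d : ℝ)) := by
    rw [Real.mul_rpow (by norm_num) (by positivity)]; gcongr
  have h4 : 0 < (2 * (n : ℝ)) ^ (1 / (d : ℝ)) := by positivity
  refine ⟨⌈(2 * (n : ℝ)) ^ (1 / (d : ℝ))⌉₊, Nat.one_le_iff_ne_zero.mpr (Nat.ceil_pos.mpr h4).ne', ?_, ?_⟩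
  · have h5 : (2 * (n : ℝ)) = ((2 * (n : ℝ)) ^ (1 / (d : ℝ))) ^ d := by
      rw [one_div, Real.rpow_inv_natCast_pow (by positivity) (by omega)]
    have h6 : ((2 * (n : ℝ)) ^ (1 / (d : ℝ))) ^ d ≤ ((⌈(2 * (n : ℝ)) ^ (1 / (d : ℝ))⌉₊ : ℝ)) ^ d := by
      gcongr; exact Nat.le_ceil _
    rw [← h5] at h6
    exact_mod_cast h6
  · have := Nat.ceil_lt_add_one h4.le
    linarith

lemma sum_ball_le {d n : ℕ} (hd : 1 ≤ d) (hn : 1 ≤ n) :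
    ∑ j ∈ Finset.Icc 1 n, exitFun d (lball d j) 0 ≤
      (d : ℝ) / ((d : ℝ) + 2) * ballVol d ^ (-(2 : ℝ) / (d : ℝ)) * (n : ℝ) ^ (1 + 2 / (d : ℝ))
      + (ballVol d ^ (-(2 : ℝ) / (d : ℝ)) + 2 * ballVol d ^ (-(1 : ℝ) / (d : ℝ)) + 1)
        * (n : ℝ) ^ (1 + 1 / (d : ℝ)) := by
  have hd1 : (1 : ℝ) ≤ d := by exact_mod_cast hd
  have hn1 : (1 : ℝ) ≤ n := by exact_mod_cast hn
  have hω := ballVol_pos d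
  set a := ballVol d ^ (-(2 : ℝ) / (d : ℝ)) with ha
  set b := ballVol d ^ (-(1 : ℝ) / (d : ℝ)) with hb
  have ha0 : 0 ≤ a := by positivity
  have hb0 : 0 ≤ b := by positivity
  have hrad : ∀ j : ℕ, rad d j = b * (j : ℝ) ^ (1 / (d : ℝ)) := by
    intro j
    unfold rad
    rw [Real.div_rpow (by positivity) hω.le, hb, neg_div, Real.rpow_neg hω.le]
    ring
  have hrad2 : ∀ j : ℕ, rad d j ^ 2 = a * (j : ℝ) ^ (2 / (d : ℝ)) := by
    intro j
    rw [hrad, mul_pow, hb, ha, ← Real.rpow_natCast, ← Real.rpow_natCast, ← Real.rpow_mul hω.le,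
      ← Real.rpow_mul (by positivity)]
    congr 2 <;> push_cast <;> ring
  have h1 : ∀ j ∈ Finset.Icc 1 n, exitFun d (lball d j) 0 ≤
      a * (j : ℝ) ^ (2 / (d : ℝ)) + (2 * b + 1) * (n : ℝ) ^ (1 / (d : ℝ)) := by
    intro j hj
    rw [Finset.mem_Icc] at hj
    refine (ball_exit_le hd hj.1).trans ?_
    have e : (rad d j + 1) ^ 2 = rad d j ^ 2 + 2 * rad d j + 1 := by ring
    rw [e, hrad2, hrad]
    have hj1 : (j : ℝ) ^ (1 / (d : ℝ)) ≤ (n : ℝ) ^ (1 / (d : ℝ)) := by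
      have : (j : ℝ) ≤ n := by exact_mod_cast hj.2
      gcongr
    have hn2 : 1 ≤ (n : ℝ) ^ (1 / (d : ℝ)) := Real.one_le_rpow hn1 (by positivity)
    nlinarith [mul_le_mul_of_nonneg_left hj1 hb0]
  refine (Finset.sum_le_sum h1).trans ?_
  rw [Finset.sum_add_distrib, ← Finset.mul_sum, Finset.sum_const, Nat.card_Icc, nsmul_eq_mul]
  have h2 := sum_rpow_le (p := 2 / (d : ℝ)) (by positivity) n
  have e1 : (n : ℝ) ^ (1 + 1 / (d : ℝ)) = n * (n : ℝ) ^ (1 / (d : ℝ)) := by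
    rw [Real.rpow_add (by positivity), Real.rpow_one]
  have h3 : (n : ℝ) ^ (2 / (d : ℝ)) ≤ (n : ℝ) ^ (1 + 1 / (d : ℝ)) := by
    apply Real.rpow_le_rpow_of_exponent_le hn1
    have : 1 / (d : ℝ) ≤ 1 := by rw [div_le_one (by positivity)]; exact hd1
    have e : 2 / (d : ℝ) = 1 / d + 1 / d := by ring
    linarith
  have e2 : (n : ℝ) ^ (2 / (d : ℝ) + 1) / (2 / (d : ℝ) + 1) = d / (d + 2) * (n : ℝ) ^ (1 + 2 / (d : ℝ)) := by
    rw [add_comm (2 / (d : ℝ)) 1]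
    have : (d : ℝ) ≠ 0 := by positivity
    field_simp
  rw [e2] at h2
  have h4 := mul_le_mul_of_nonneg_left (h2.trans (add_le_add_right h3 _)) ha0
  have e3 : ((n + 1 - 1 : ℕ) : ℝ) = n := by simp
  rw [e3]
  have e4 : (n : ℝ) * ((2 * b + 1) * (n : ℝ) ^ (1 / (d : ℝ))) = (2 * b + 1) * (n : ℝ) ^ (1 + 1 / (d : ℝ)) := by
    rw [e1]; ring
  rw [e4]
  linarith

theorem lemma_Tn (d : ℕ) (hd : 1 ≤ d) :
    ∃ C : ℝ, ∀ (D : ℝ), 1 ≤ D → ∀ r : Site d → ℕ → Dir d, HasDiscrepancy d D r →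
      ∀ n : ℕ, 1 ≤ n →
        (totalSteps r n : ℝ) ≤ (d : ℝ) / ((d : ℝ) + 2) * ballVol d ^ (-(2 : ℝ) / (d : ℝ))
            * (n : ℝ) ^ (1 + 2 / (d : ℝ)) + PhiSum d n + C * D * (n : ℝ) ^ (1 + 1 / (d : ℝ)) := by
  have hd1 : (1 : ℝ) ≤ d := by exact_mod_cast hd
  set a := ballVol d ^ (-(2 : ℝ) / (d : ℝ)) + 2 * ballVol d ^ (-(1 : ℝ) / (d : ℝ)) + 1 with ha
  have ha0 : 0 ≤ a := by
    have := ballVol_pos d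
    positivity
  refine ⟨a + 4 * d ^ 2 * (1 + d * 4), ?_⟩
  intro D hD r hr n hn
  have hn1 : (1 : ℝ) ≤ n := by exact_mod_cast hn
  have hD0 : 0 ≤ D := by linarith
  obtain ⟨B, hBc, hT⟩ := T_le hd hr hD0 n hn
  obtain ⟨L, hL1, hL2, hL3⟩ := exists_L hd hn
  have hG := grad_le hd B L hL1 (by rw [hBc]; exact hL2)
  have hch := chain hd B (fun j => phi d j + exitFun d (lball d j) 0) 0
    (fun S _ _ => exit_le_phi hd S) n B (Finset.Subset.refl _) hBc 0
    (fun x hx => (exit_out hd _ B.finite_toSet x (by simpa using hx)).le)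
    (fun x _ => exit_nonneg hd _ B.finite_toSet x)
  rw [Finset.sum_add_distrib] at hch
  have hb := sum_ball_le hd hn
  rw [← ha] at hb
  have e1 : (n : ℝ) ^ (1 + 1 / (d : ℝ)) = n * (n : ℝ) ^ (1 / (d : ℝ)) := by
    rw [Real.rpow_add (by positivity), Real.rpow_one]
  have hn2 : 1 ≤ (n : ℝ) ^ (1 / (d : ℝ)) := Real.one_le_rpow hn1 (by positivity)
  have h1 : 1 + d * (L : ℝ) ≤ (1 + d * 4) * (n : ℝ) ^ (1 / (d : ℝ)) := by
    have := mul_le_mul_of_nonneg_left hL3 (by positivity : (0 : ℝ) ≤ d)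
    linarith
  have h2 : 4 * (d : ℝ) ^ 2 * B.card * (1 + d * (L : ℝ)) ≤ 4 * (d : ℝ) ^ 2 * (1 + d * 4) * (n : ℝ) ^ (1 + 1 / (d : ℝ)) := by
    rw [hBc, e1]
    calc 4 * (d : ℝ) ^ 2 * n * (1 + d * (L : ℝ))
        ≤ 4 * (d : ℝ) ^ 2 * n * ((1 + d * 4) * (n : ℝ) ^ (1 / (d : ℝ))) := by gcongr
      _ = _ := by ring
  have h3 := mul_le_mul_of_nonneg_left (hG.trans h2) hD0
  have h4 : a * (n : ℝ) ^ (1 + 1 / (d : ℝ)) ≤ D * (a * (n : ℝ) ^ (1 + 1 / (d : ℝ))) :=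
    le_mul_of_one_le_left (by positivity) hD
  unfold PhiSum
  have e5 : (a + 4 * (d : ℝ) ^ 2 * (1 + d * 4)) * D * (n : ℝ) ^ (1 + 1 / (d : ℝ))
    = D * (a * (n : ℝ) ^ (1 + 1 / (d : ℝ))) + D * (4 * (d : ℝ) ^ 2 * (1 + d * 4) * (n : ℝ) ^ (1 + 1 / (d : ℝ))) := by ring
  rw [e5]
  linarith

end RotorRouterPaper
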